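/- (Quadratic upper bound on divergence for RAAGs.) Suppose Γ is connected and has at least two vertices. Then there is a constant C ≥ 1 such that for every natural number r and any two elements x, y ∈ A_Γ with |x| = |y| = r, there is a path in the Cayley graph of A_Γ from x to y of length at most C·r² + C, all of whose vertices have word length at least r/C. -/

import Mathlib

/-- The commutator relators of the right-angled Artin group on the graph `Γ`. -/
def raagRels {V : Type*} (Γ : SimpleGraph V) : Set (FreeGroup V) :=
  {r | ∃ u v : V, Γ.Adj u v ∧
    r = FreeGroup.of u * FreeGroup.of v * (FreeGroup.of u)⁻¹ * (FreeGroup.of v)⁻¹}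

/-- The right-angled Artin group `A_Γ` on the graph `Γ`. -/
abbrev RAAG {V : Type*} (Γ : SimpleGraph V) : Type _ :=
  PresentedGroup (raagRels Γ)

/-- The generator of `A_Γ` corresponding to the vertex `v`. -/
def RAAG.gen {V : Type*} (Γ : SimpleGraph V) (v : V) : RAAG Γ :=
  PresentedGroup.of v

/-- Word length of `g` with respect to a generating set `X`: the least `n` such that
`g` is a product of `n` elements of `X ∪ X⁻¹`. -/
noncomputable def wlen {G : Type*} [Group G] (X : Set G) (g : G) : ℕ :=
  sInf {n | ∃ l : List G, l.length = n ∧ (∀ x ∈ l, x ∈ X ∨ x⁻¹ ∈ X) ∧ l.prod = g}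

/-- Word length in `A_Γ` with respect to the vertex generating set. -/
noncomputable def RAAG.wordLength {V : Type*} (Γ : SimpleGraph V) (g : RAAG Γ) : ℕ :=
  wlen (Set.range (RAAG.gen Γ)) g

/-- The letter `v^e` (with `e = true` for `v` and `e = false` for `v⁻¹`). -/
def RAAG.letter {V : Type*} (Γ : SimpleGraph V) (v : V) (e : Bool) : RAAG Γ :=
  if e then RAAG.gen Γ v else (RAAG.gen Γ v)⁻¹

/-!
Fix a vertex `v`, an integer `N` comparable to `r`, and write `x = s₁ ⋯ sₙ` as a geodesic word.
The path goes from `x` to `x vᴺ` and then, deleting the last letter of `x` repeatedly, through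
`s₁ ⋯ sᵢ vᴺ` down to `vᴺ`; two such paths are joined at `vᴺ`.

* One of the two rays `x vᵏ`, `x v⁻ᵏ` stays at distance at least `|x| / 2` from `1`: together they
  form a geodesic line, so they cannot both come close to `1`.
* If `v` and `w` are adjacent, then `g vᴺ` and `g wᴺ` are joined through the commuting product
  `g vᴺ wᴺ = g wᴺ vᴺ`. This path is far from `1` since at each of its points the exponent sum of
  `v` or that of `w` is large. Since `Γ` has finite diameter, the same holds with `O(N)` steps for
  any `v` and `w`.
* To delete a letter `s = u^{±1}`, pass from `g s vᴺ` to `g s uᴺ = g uᴺ s`, then to `g uᴺ`, and back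
  to `g vᴺ`. This costs `O(N)` steps, for each of the `r` letters.
-/

open Pointwise

section WordLength

variable {G : Type*} [Group G] {X : Set G}

theorem wlen_prod_le_length {l : List G} (hl : ∀ s ∈ l, s ∈ X ∪ X⁻¹) :
    wlen X l.prod ≤ l.length :=
  Nat.sInf_le ⟨l, rfl, hl, rfl⟩

theorem wlen_one : wlen X 1 = 0 :=
  Nat.le_zero.mp (wlen_prod_le_length (l := []) (by simp))

theorem wlen_le_one_of_mem {s : G} (hs : s ∈ X ∪ X⁻¹) : wlen X s ≤ 1 := by
  simpa only [List.prod_singleton, List.length_singleton] using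
    wlen_prod_le_length (l := [s]) (by simpa only [List.forall_mem_singleton] using hs)

theorem exists_list_length_eq_wlen (hX : Subgroup.closure X = ⊤) (g : G) :
    ∃ l : List G, l.length = wlen X g ∧ (∀ s ∈ l, s ∈ X ∪ X⁻¹) ∧ l.prod = g := by
  have hg : g ∈ Submonoid.closure (X ∪ X⁻¹) := by
    rw [← Subgroup.closure_toSubmonoid, hX]
    trivial
  obtain ⟨l, hl, hprod⟩ := Submonoid.exists_list_of_mem_closure hg
  exact Nat.sInf_mem (s := {n | ∃ l : List G, l.length = n ∧ (∀ s ∈ l, s ∈ X ∪ X⁻¹) ∧ l.prod = g})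
    ⟨l.length, l, rfl, hl, hprod⟩

theorem wlen_eq_zero_iff (hX : Subgroup.closure X = ⊤) {g : G} : wlen X g = 0 ↔ g = 1 := by
  refine ⟨fun hg => ?_, fun hg => hg ▸ wlen_one⟩
  obtain ⟨l, hlen, -, rfl⟩ := exists_list_length_eq_wlen hX g
  rw [List.eq_nil_of_length_eq_zero (hlen.trans hg), List.prod_nil]

theorem wlen_mul_le (hX : Subgroup.closure X = ⊤) (g h : G) :
    wlen X (g * h) ≤ wlen X g + wlen X h := by
  obtain ⟨l, hlen, hl, rfl⟩ := exists_list_length_eq_wlen hX g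
  obtain ⟨k, hklen, hk, rfl⟩ := exists_list_length_eq_wlen hX h
  rw [← hlen, ← hklen, ← List.prod_append, ← List.length_append]
  exact wlen_prod_le_length (List.forall_mem_append.mpr ⟨hl, hk⟩)

theorem wlen_inv_le (hX : Subgroup.closure X = ⊤) (g : G) : wlen X g⁻¹ ≤ wlen X g := by
  obtain ⟨l, hlen, hl, rfl⟩ := exists_list_length_eq_wlen hX g
  rw [← hlen, List.prod_inv_reverse]
  refine (wlen_prod_le_length fun s hs => ?_).trans_eq (by simp)
  obtain ⟨t, ht, rfl⟩ : ∃ t ∈ l, t⁻¹ = s := by simpa using hs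
  simpa [or_comm] using hl t ht

theorem wlen_inv (hX : Subgroup.closure X = ⊤) (g : G) : wlen X g⁻¹ = wlen X g :=
  (wlen_inv_le hX g).antisymm (by simpa only [inv_inv] using wlen_inv_le hX g⁻¹)

theorem wlen_inv_mul_le (hX : Subgroup.closure X = ⊤) (g h : G) :
    wlen X (g⁻¹ * h) ≤ wlen X g + wlen X h :=
  wlen_inv hX g ▸ wlen_mul_le hX g⁻¹ h

theorem wlen_le_wlen_mul_add (hX : Subgroup.closure X = ⊤) (g h : G) :
    wlen X g ≤ wlen X (g * h) + wlen X h := by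
  simpa only [mul_inv_cancel_right, wlen_inv hX h] using wlen_mul_le hX (g * h) h⁻¹

theorem wlen_pow_le (hX : Subgroup.closure X = ⊤) {s : G} (hs : s ∈ X ∪ X⁻¹) (n : ℕ) :
    wlen X (s ^ n) ≤ n := by
  induction n with
  | zero => rw [pow_zero, wlen_one]
  | succ n ih =>
    rw [pow_succ]
    exact (wlen_mul_le hX _ _).trans (Nat.add_le_add ih (wlen_le_one_of_mem hs))

theorem exists_mul_eq_of_wlen_eq_succ (hX : Subgroup.closure X = ⊤) {g : G} {n : ℕ}
    (hg : wlen X g = n + 1) :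
    ∃ h, wlen X h = n ∧ ∃ s ∈ X ∪ X⁻¹, h * s = g := by
  obtain ⟨l, hlen, hl, hprod⟩ := exists_list_length_eq_wlen hX g
  obtain ⟨k, s, rfl⟩ := List.eq_nil_or_concat' l |>.resolve_left (by rintro rfl; simp_all)
  obtain ⟨hk, hs⟩ := List.forall_mem_append.mp hl
  rw [List.forall_mem_singleton] at hs
  rw [List.prod_append, List.prod_singleton] at hprod
  refine ⟨k.prod, le_antisymm ?_ ?_, s, hs, hprod⟩
  · have hk_le := wlen_prod_le_length hk
    rw [List.length_append, List.length_singleton] at hlen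
    omega
  · have hmul := wlen_mul_le hX k.prod s
    have hs_le := wlen_le_one_of_mem hs
    rw [hprod] at hmul
    omega

theorem natAbs_toAdd_le_wlen (hX : Subgroup.closure X = ⊤) (f : G →* Multiplicative ℤ)
    (hf : ∀ s ∈ X, (f s).toAdd.natAbs ≤ 1) (g : G) : (f g).toAdd.natAbs ≤ wlen X g := by
  induction hn : wlen X g generalizing g with
  | zero => simp [(wlen_eq_zero_iff hX).mp hn]
  | succ n ih =>
    obtain ⟨h, hh, s, hs, rfl⟩ := exists_mul_eq_of_wlen_eq_succ hX hn
    have hfs : (f s).toAdd.natAbs ≤ 1 := by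
      rcases hs with hs | hs
      · exact hf s hs
      · simpa using hf s⁻¹ hs
    rw [map_mul, toAdd_mul]
    exact (Int.natAbs_add_le _ _).trans (Nat.add_le_add (ih h hh) hfs)

theorem wlen_inv_mul_eq_one_of_adj (hX : Subgroup.closure X = ⊤) {g h : G}
    (hgh : (SimpleGraph.mulCayley X).Adj g h) :
    wlen X (g⁻¹ * h) = 1 := by
  obtain ⟨hne, hmem⟩ := (SimpleGraph.mulCayley_adj X g h).mp hgh
  have hletter : g⁻¹ * h ∈ X ∪ X⁻¹ := by simpa using hmem
  have hpos : wlen X (g⁻¹ * h) ≠ 0 := fun h0 =>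
    hne (inv_mul_eq_one.mp ((wlen_eq_zero_iff hX).mp h0))
  have hle := wlen_le_one_of_mem hletter
  omega

theorem wlen_le_two_mul_wlen_mul_pow_or_inv_pow (hX : Subgroup.closure X = ⊤) {s : G}
    (hs : ∀ n : ℕ, wlen X (s ^ n) = n) (x : G) :
    (∀ n : ℕ, wlen X x ≤ 2 * wlen X (x * s ^ n)) ∨
      ∀ n : ℕ, wlen X x ≤ 2 * wlen X (x * s⁻¹ ^ n) := by
  -- If both `x sᵃ` and `x s⁻ᵇ` were shorter than `|x| / 2`, then `a` and `b` would both exceed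
  -- `|x| / 2`, whereas `a + b` is the distance between these two points and so less than `|x|`.
  by_contra! hshort
  obtain ⟨⟨a, ha⟩, b, hb⟩ := hshort
  have hxa := wlen_le_wlen_mul_add hX x (s ^ a)
  have hxb := wlen_le_wlen_mul_add hX x (s⁻¹ ^ b)
  have hab := wlen_inv_mul_le hX (x * s⁻¹ ^ b) (x * s ^ a)
  have hgap : (x * s⁻¹ ^ b)⁻¹ * (x * s ^ a) = s ^ (b + a) := by rw [pow_add]; group
  rw [inv_pow, wlen_inv hX, ← inv_pow, hs] at hxb
  rw [hgap, hs] at hab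
  rw [hs] at hxa
  omega

end WordLength

/-- `JoinedOutsideBall X m n g h` says that `g` and `h` are joined by a path of length at most `n`
in the Cayley graph of `X` all of whose vertices, including `g` and `h`, have word length at least
`m`. Keeping both bounds in the relation lets detours around a ball be concatenated while their
lengths add up. -/
def JoinedOutsideBall {G : Type*} [Group G] (X : Set G) (m n : ℕ) (g h : G) : Prop :=
  ∃ w : (SimpleGraph.mulCayley X).Walk g h, w.length ≤ n ∧ ∀ k ∈ w.support, m ≤ wlen X k

namespace JoinedOutsideBall

variable {G : Type*} [Group G] {X : Set G} {m n n' : ℕ} {g h k s : G}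

theorem refl (hg : m ≤ wlen X g) : JoinedOutsideBall X m n g g :=
  ⟨.nil, Nat.zero_le n, by simpa using hg⟩

theorem symm : JoinedOutsideBall X m n g h → JoinedOutsideBall X m n h g
  | ⟨w, hlen, hfar⟩ => ⟨w.reverse, by simpa using hlen, by simpa using hfar⟩

theorem trans : JoinedOutsideBall X m n g h → JoinedOutsideBall X m n' h k →
    JoinedOutsideBall X m (n + n') g k
  | ⟨w, hlen, hfar⟩, ⟨w', hlen', hfar'⟩ => by
    refine ⟨w.append w', ?_, fun k hk => ?_⟩
    · rw [SimpleGraph.Walk.length_append]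
      exact Nat.add_le_add hlen hlen'
    · exact ((SimpleGraph.Walk.mem_support_append_iff w w').mp hk).elim (hfar k) (hfar' k)

theorem mono (hn : n ≤ n') : JoinedOutsideBall X m n g h → JoinedOutsideBall X m n' g h
  | ⟨w, hlen, hfar⟩ => ⟨w, hlen.trans hn, hfar⟩

theorem mul_letter (hs : s ∈ X ∪ X⁻¹) (hg : m ≤ wlen X g) (hgs : m ≤ wlen X (g * s)) :
    JoinedOutsideBall X m 1 g (g * s) := by
  rcases eq_or_ne s 1 with rfl | hs1
  · simpa using refl hg
  · have hadj : (SimpleGraph.mulCayley X).Adj g (g * s) := by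
      simpa [SimpleGraph.mulCayley_adj, hs1] using hs
    exact ⟨hadj.toWalk, by simp, by simp [hg, hgs]⟩

theorem mul_pow (hs : s ∈ X ∪ X⁻¹) (hg : ∀ i ≤ n, m ≤ wlen X (g * s ^ i)) :
    JoinedOutsideBall X m n g (g * s ^ n) := by
  induction n with
  | zero => simpa using refl (by simpa using hg 0 le_rfl)
  | succ n ih =>
    have hlast := hg (n + 1) le_rfl
    rw [pow_succ, ← mul_assoc] at hlast ⊢
    exact (ih fun i hi => hg i (hi.trans n.le_succ)).trans
      (mul_letter hs (hg n n.le_succ) hlast)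

theorem mul_zpow (hs : s ∈ X) (a : ℤ) (hg : ∀ i : ℤ, m ≤ wlen X (g * s ^ i)) :
    JoinedOutsideBall X m a.natAbs g (g * s ^ a) := by
  obtain ⟨n, rfl | rfl⟩ := a.eq_nat_or_neg
  · simpa using mul_pow (n := n) (.inl hs) fun i _ => by simpa using hg i
  · simpa using mul_pow (s := s⁻¹) (n := n) (.inr (by simpa using hs))
      fun i _ => by simpa using hg (-i)

theorem exists_path (hX : Subgroup.closure X = ⊤) :
    JoinedOutsideBall X m n g h → ∃ L ≤ n, ∃ p : ℕ → G, p 0 = g ∧ p L = h ∧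
      (∀ i < L, wlen X ((p i)⁻¹ * p (i + 1)) = 1) ∧ ∀ i, m ≤ wlen X (p i)
  | ⟨w, hlen, hfar⟩ =>
    ⟨w.length, hlen, w.getVert, w.getVert_zero, w.getVert_length,
      fun _ hi => wlen_inv_mul_eq_one_of_adj hX (w.adj_getVert_succ hi),
      fun i => hfar _ (w.getVert_mem_support i)⟩

end JoinedOutsideBall

namespace RAAG

variable {V : Type*} {Γ : SimpleGraph V}

theorem closure_range_gen (Γ : SimpleGraph V) : Subgroup.closure (Set.range (gen Γ)) = ⊤ :=
  PresentedGroup.closure_range_of (raagRels Γ)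

theorem commute_gen_of_adj {v w : V} (h : Γ.Adj v w) : Commute (gen Γ v) (gen Γ w) := by
  have hrel : gen Γ v * gen Γ w * (gen Γ v)⁻¹ * (gen Γ w)⁻¹ = 1 :=
    PresentedGroup.one_of_mem (rels := raagRels Γ) ⟨v, w, h, rfl⟩
  rwa [mul_inv_eq_one, mul_inv_eq_iff_eq_mul] at hrel

open Classical in
/-- The exponent sum of the generator `v`, as a homomorphism to the integers written
multiplicatively. It serves to bound word lengths in `A_Γ` from below. -/
noncomputable def exponentSum (Γ : SimpleGraph V) (v : V) : RAAG Γ →* Multiplicative ℤ :=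
  PresentedGroup.toGroup (f := Pi.mulSingle v (Multiplicative.ofAdd 1)) (by
    rintro _ ⟨a, b, -, rfl⟩
    simp [mul_comm])

theorem exponentSum_gen_self (v : V) : exponentSum Γ v (gen Γ v) = Multiplicative.ofAdd 1 := by
  simp [exponentSum, gen]

theorem exponentSum_gen_of_ne {u v : V} (h : u ≠ v) : exponentSum Γ v (gen Γ u) = 1 := by
  simp [exponentSum, gen, h]

theorem natAbs_exponentSum_le_wordLength (v : V) (g : RAAG Γ) :
    (exponentSum Γ v g).toAdd.natAbs ≤ wordLength Γ g := by
  refine natAbs_toAdd_le_wlen (closure_range_gen Γ) _ ?_ g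
  rintro _ ⟨u, rfl⟩
  rcases eq_or_ne u v with rfl | h
  · simp [exponentSum_gen_self]
  · simp [exponentSum_gen_of_ne h]

theorem natAbs_le_wordLength_add_wordLength {v : V} {h : RAAG Γ} (hh : exponentSum Γ v h = 1)
    (g : RAAG Γ) (a : ℤ) :
    a.natAbs ≤ wordLength Γ g + wordLength Γ (g * gen Γ v ^ a * h) := by
  have hsum : (exponentSum Γ v (g * gen Γ v ^ a * h)).toAdd = (exponentSum Γ v g).toAdd + a := by
    simp [hh, exponentSum_gen_self]
  have hg := natAbs_exponentSum_le_wordLength v g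
  have hgah := natAbs_exponentSum_le_wordLength v (g * gen Γ v ^ a * h)
  rw [hsum] at hgah
  omega

theorem le_wordLength_mul_pow (v : V) {g : RAAG Γ} {m N : ℕ} (hN : wordLength Γ g + m ≤ N) :
    m ≤ wordLength Γ (g * gen Γ v ^ N) := by
  have hle := natAbs_le_wordLength_add_wordLength (map_one (exponentSum Γ v)) g N
  rw [mul_one, zpow_natCast, Int.natAbs_natCast] at hle
  omega

theorem wordLength_gen_pow (v : V) (n : ℕ) : wordLength Γ (gen Γ v ^ n) = n := by
  have hone : wordLength Γ 1 = 0 := wlen_one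
  have hlower : n ≤ wordLength Γ (1 * gen Γ v ^ n) := le_wordLength_mul_pow v (by omega)
  rw [one_mul] at hlower
  exact (wlen_pow_le (closure_range_gen Γ) (.inl (Set.mem_range_self v)) n).antisymm hlower

theorem exists_commute_gen_of_mem {s : RAAG Γ}
    (hs : s ∈ Set.range (gen Γ) ∪ (Set.range (gen Γ))⁻¹) : ∃ u, Commute s (gen Γ u) := by
  rcases hs with ⟨u, rfl⟩ | ⟨u, hu⟩
  · exact ⟨u, .refl _⟩
  · exact ⟨u, hu ▸ (Commute.refl s).inv_right⟩

section Paths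

variable {m N : ℕ} {u v w : V} {g x : RAAG Γ}

theorem joinedOutsideBall_mul_zpow_of_adj (hvw : Γ.Adj v w) {a b : ℤ}
    (ha : wordLength Γ g + m ≤ a.natAbs) (hb : wordLength Γ g + m ≤ b.natAbs) :
    JoinedOutsideBall (Set.range (gen Γ)) m (b.natAbs + a.natAbs)
      (g * gen Γ v ^ a) (g * gen Γ w ^ b) := by
  have hfar {v w : V} (hne : w ≠ v) {a : ℤ} (ha : wordLength Γ g + m ≤ a.natAbs) (i : ℤ) :
      m ≤ wordLength Γ (g * gen Γ v ^ a * gen Γ w ^ i) := by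
    have hle := natAbs_le_wordLength_add_wordLength (h := gen Γ w ^ i)
      (by rw [map_zpow, exponentSum_gen_of_ne hne, one_zpow]) g a
    omega
  have hcomm : g * gen Γ w ^ b * gen Γ v ^ a = g * gen Γ v ^ a * gen Γ w ^ b := by
    rw [mul_assoc, mul_assoc, ((commute_gen_of_adj hvw).zpow_zpow a b).eq]
  have hleft := JoinedOutsideBall.mul_zpow (Set.mem_range_self w) b (hfar hvw.ne' ha)
  have hright := JoinedOutsideBall.mul_zpow (Set.mem_range_self v) a (hfar hvw.ne hb)
  exact hleft.trans (hcomm ▸ hright.symm)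

theorem joinedOutsideBall_mul_pow_of_walk (p : Γ.Walk v w) (hN : wordLength Γ g + m ≤ N) :
    JoinedOutsideBall (Set.range (gen Γ)) m (p.length * (2 * N))
      (g * gen Γ v ^ N) (g * gen Γ w ^ N) := by
  induction p with
  | nil => exact .refl (le_wordLength_mul_pow _ hN)
  | cons hadj p ih =>
    have hfirst := joinedOutsideBall_mul_zpow_of_adj (a := N) (b := N) hadj hN hN
    simp only [zpow_natCast] at hfirst
    refine (hfirst.trans ih).mono (le_of_eq ?_)
    rw [SimpleGraph.Walk.length_cons, Int.natAbs_natCast]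
    ring

theorem joinedOutsideBall_mul_pow (hΓ : Γ.ediam ≠ ⊤) (v w : V) (hN : wordLength Γ g + m ≤ N) :
    JoinedOutsideBall (Set.range (gen Γ)) m (Γ.diam * (2 * N))
      (g * gen Γ v ^ N) (g * gen Γ w ^ N) := by
  obtain ⟨p, hp⟩ :=
    (SimpleGraph.preconnected_of_ediam_ne_top hΓ v w).exists_walk_length_eq_dist
  refine (joinedOutsideBall_mul_pow_of_walk p hN).mono (Nat.mul_le_mul_right _ ?_)
  exact hp.trans_le (SimpleGraph.dist_le_diam hΓ)

theorem joinedOutsideBall_mul_letter_mul_pow (hΓ : Γ.ediam ≠ ⊤) (v : V) {s : RAAG Γ}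
    (hs : s ∈ Set.range (gen Γ) ∪ (Set.range (gen Γ))⁻¹) (hg : wordLength Γ g + m ≤ N)
    (hgs : wordLength Γ (g * s) + m ≤ N) :
    JoinedOutsideBall (Set.range (gen Γ)) m (4 * N * Γ.diam + 1)
      (g * s * gen Γ v ^ N) (g * gen Γ v ^ N) := by
  obtain ⟨u, hu⟩ := exists_commute_gen_of_mem hs
  have hcomm : g * s * gen Γ u ^ N = g * gen Γ u ^ N * s := by
    rw [mul_assoc, mul_assoc, (hu.pow_right N).eq]
  have hstep := JoinedOutsideBall.mul_letter hs (le_wordLength_mul_pow u hg)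
    (hcomm ▸ le_wordLength_mul_pow u hgs)
  rw [← hcomm] at hstep
  exact ((joinedOutsideBall_mul_pow hΓ v u hgs).trans hstep.symm).trans
    (joinedOutsideBall_mul_pow hΓ u v hg) |>.mono (le_of_eq (by ring))

theorem joinedOutsideBall_mul_pow_gen_pow (hΓ : Γ.ediam ≠ ⊤) (v : V)
    (hN : wordLength Γ x + m ≤ N) :
    JoinedOutsideBall (Set.range (gen Γ)) m (wordLength Γ x * (4 * N * Γ.diam + 1))
      (x * gen Γ v ^ N) (gen Γ v ^ N) := by
  induction hn : wordLength Γ x generalizing x with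
  | zero =>
    obtain rfl := (wlen_eq_zero_iff (closure_range_gen Γ)).mp hn
    have hfar := le_wordLength_mul_pow v hN
    rw [one_mul] at hfar ⊢
    exact .refl hfar
  | succ n ih =>
    obtain ⟨g, hg : wordLength Γ g = n, s, hs, rfl⟩ :=
      exists_mul_eq_of_wlen_eq_succ (closure_range_gen Γ) hn
    have hgN : wordLength Γ g + m ≤ N := by omega
    refine ((joinedOutsideBall_mul_letter_mul_pow hΓ v hs hgN hN).trans (ih hgN hg)).mono ?_
    exact le_of_eq (by ring)

theorem joinedOutsideBall_self_mul_pow (hvu : Γ.Adj v u) (hm : 2 * m ≤ wordLength Γ x + 1)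
    (hN : wordLength Γ x + m ≤ N) :
    JoinedOutsideBall (Set.range (gen Γ)) m (5 * N) x (x * gen Γ v ^ N) := by
  have hfar {k : RAAG Γ} (hk : wordLength Γ x ≤ 2 * wordLength Γ k) : m ≤ wordLength Γ k := by
    omega
  have hv : gen Γ v ∈ Set.range (gen Γ) := Set.mem_range_self v
  rcases wlen_le_two_mul_wlen_mul_pow_or_inv_pow (closure_range_gen Γ)
    (wordLength_gen_pow v) x with hray | hray
  · exact (JoinedOutsideBall.mul_pow (.inl hv) fun i _ => hfar (hray i)).mono (by omega)
  · -- The ray in the direction of `v⁻¹` ends at `x v⁻ᴺ`, which `x uᴺ` joins to `x vᴺ`.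
    have hback := JoinedOutsideBall.mul_pow (n := N) (.inr (Set.inv_mem_inv.mpr hv))
      fun i _ => hfar (hray i)
    have hout := joinedOutsideBall_mul_zpow_of_adj (g := x) (m := m) (a := -N) (b := N) hvu
      (by simpa using hN) hN
    have hin := joinedOutsideBall_mul_zpow_of_adj (g := x) (m := m) (a := N) (b := N) hvu.symm hN hN
    rw [inv_pow, ← zpow_natCast, ← zpow_neg] at hback
    rw [zpow_natCast _ N] at hin
    exact ((hback.trans hout).trans hin).mono (by omega)

theorem joinedOutsideBall_gen_pow (hΓ : Γ.ediam ≠ ⊤) (hvu : Γ.Adj v u) {r : ℕ}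
    (hx : wordLength Γ x = r) :
    JoinedOutsideBall (Set.range (gen Γ)) ((r + 1) / 2) (11 * r + 8 * Γ.diam * r ^ 2)
      x (gen Γ v ^ (2 * r)) := by
  have hN : wordLength Γ x + (r + 1) / 2 ≤ 2 * r := by omega
  have hout := joinedOutsideBall_self_mul_pow hvu (by omega) hN
  have hdelete := joinedOutsideBall_mul_pow_gen_pow hΓ v hN
  exact (hout.trans hdelete).mono (le_of_eq (by rw [hx]; ring))

end Paths

end RAAG

theorem raag_quadratic_upper_divergence_general {V : Type*} [Nontrivial V]
    (Γ : SimpleGraph V) (hΓ : Γ.ediam ≠ ⊤) :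
    ∃ C : ℝ, 1 ≤ C ∧
      ∀ (r : ℕ) (x y : RAAG Γ),
        RAAG.wordLength Γ x = r → RAAG.wordLength Γ y = r →
        ∃ (L : ℕ) (p : ℕ → RAAG Γ),
          (L : ℝ) ≤ C * (r : ℝ) ^ 2 + C ∧ p 0 = x ∧ p L = y ∧
          (∀ i < L, RAAG.wordLength Γ ((p i)⁻¹ * p (i + 1)) = 1) ∧
          (∀ i ≤ L, (r : ℝ) / C ≤ (RAAG.wordLength Γ (p i) : ℝ)) := by
  have hcon := SimpleGraph.preconnected_of_ediam_ne_top hΓ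
  obtain ⟨v, u, hvu⟩ : ∃ v u, Γ.Adj v u :=
    ⟨_, hcon.exists_adj_of_nontrivial (Classical.arbitrary V)⟩
  refine ⟨16 * Γ.diam + 22, by linarith [Nat.cast_nonneg (α := ℝ) Γ.diam],
    fun r x y hx hy => ?_⟩
  obtain ⟨L, hL, p, hp0, hpL, hstep, hfar⟩ :=
    ((RAAG.joinedOutsideBall_gen_pow hΓ hvu hx).trans
      (RAAG.joinedOutsideBall_gen_pow hΓ hvu hy).symm).exists_path (RAAG.closure_range_gen Γ)
  refine ⟨L, p, ?_, hp0, hpL, hstep, fun i _ => ?_⟩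
  · have hbound : L ≤ (16 * Γ.diam + 22) * r ^ 2 := by
      nlinarith [Nat.le_self_pow two_ne_zero r]
    calc (L : ℝ) ≤ (16 * Γ.diam + 22) * r ^ 2 := mod_cast hbound
      _ ≤ _ := le_add_of_nonneg_right (by positivity)
  · have hhalf : r ≤ 2 * RAAG.wordLength Γ (p i) := by
      have hi : (r + 1) / 2 ≤ RAAG.wordLength Γ (p i) := hfar i
      omega
    rw [div_le_iff₀' (by positivity)]
    exact_mod_cast hhalf.trans (Nat.mul_le_mul_right _ (by omega))

theorem raag_quadratic_upper_divergence {V : Type*} [Fintype V]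
    (Γ : SimpleGraph V) (hV : 1 < Fintype.card V) (hcon : Γ.Connected) :
    ∃ C : ℝ, 1 ≤ C ∧
      ∀ (r : ℕ) (x y : RAAG Γ),
        RAAG.wordLength Γ x = r → RAAG.wordLength Γ y = r →
        ∃ (L : ℕ) (p : ℕ → RAAG Γ),
          (L : ℝ) ≤ C * (r : ℝ) ^ 2 + C ∧ p 0 = x ∧ p L = y ∧
          (∀ i < L, RAAG.wordLength Γ ((p i)⁻¹ * p (i + 1)) = 1) ∧
          (∀ i ≤ L, (r : ℝ) / C ≤ (RAAG.wordLength Γ (p i) : ℝ)) := by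
  have : Nontrivial V := Fintype.one_lt_card_iff_nontrivial.mp hV
  exact raag_quadratic_upper_divergence_general Γ
    (SimpleGraph.connected_iff_ediam_ne_top.mp hcon)
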